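/- Suppose a 3-form T and a 1-form θ on ℝ^8 satisfy the structure equation T_{klm} = (1/2) T_{jsk}Φ_{jslm} − (1/2) T_{jsl}Φ_{jskm} + (1/2) T_{jsm}Φ_{jskl} + (7/6) θ_sΦ_{sklm} for all k,l,m. Let σ^T be the 4-form with components σ^T_{abcd} = T_{sab}T_{scd} + T_{sbc}T_{sad} + T_{sca}T_{sbd}. Then σ^T_{jabc}Φ_{jabc} = 2‖T‖² − (49/3)‖θ‖², where ‖T‖² = T_{ijk}T_{ijk} and ‖θ‖² = θ_iθ_i (tensor norms, summing over all indices). -/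

import Mathlib

/-!
We work in ℝ⁸ with the standard basis `e₀, …, e₇`.  A `k`-form is a totally antisymmetric
map `(Fin 8)^k → ℝ`; repeated indices are summed over `Fin 8` and `kd` is the Kronecker
delta.  `Phi` is the fundamental 4-form of the standard `Spin(7)`-structure on ℝ⁸,
`Φ = -e₀₁₂₇ + e₀₂₃₆ - e₀₃₄₇ - e₀₅₆₇ + e₀₁₄₆ + e₀₂₄₅ - e₀₁₃₅
     - e₃₄₅₆ - e₁₄₅₇ - e₁₂₅₆ - e₁₂₃₄ - e₂₃₅₇ - e₁₃₆₇ + e₂₄₆₇`.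
-/

noncomputable section

/-- Kronecker delta on `Fin 8`. -/
def kd (a b : Fin 8) : ℝ := if a = b then 1 else 0

/-- Component at the indices `(i,j,k,l)` of the wedge product `e_a ∧ e_b ∧ e_c ∧ e_d`
of standard coordinate 1-forms, normalized so that `(e_a ∧ e_b ∧ e_c ∧ e_d)_{abcd} = 1`;
it is the alternating sum of products of Kronecker deltas. -/
def wedge4 (a b c d i j k l : Fin 8) : ℝ :=
  Matrix.det !![kd a i, kd a j, kd a k, kd a l;
                kd b i, kd b j, kd b k, kd b l;
                kd c i, kd c j, kd c k, kd c l;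
                kd d i, kd d j, kd d k, kd d l]

/-- The fundamental 4-form `Φ` of the standard `Spin(7)`-structure on `ℝ⁸`, in components:
the totally antisymmetric 4-tensor with `Φ_{0127} = -1`, `Φ_{0236} = 1`, `Φ_{0347} = -1`,
`Φ_{0567} = -1`, `Φ_{0146} = 1`, `Φ_{0245} = 1`, `Φ_{0135} = -1`, `Φ_{3456} = -1`,
`Φ_{1457} = -1`, `Φ_{1256} = -1`, `Φ_{1234} = -1`, `Φ_{2357} = -1`, `Φ_{1367} = -1`,
`Φ_{2467} = 1`, all components not obtained from these by permutation being zero. -/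
def Phi (i j k l : Fin 8) : ℝ :=
    -wedge4 0 1 2 7 i j k l + wedge4 0 2 3 6 i j k l - wedge4 0 3 4 7 i j k l
  - wedge4 0 5 6 7 i j k l + wedge4 0 1 4 6 i j k l + wedge4 0 2 4 5 i j k l
  - wedge4 0 1 3 5 i j k l - wedge4 3 4 5 6 i j k l - wedge4 1 4 5 7 i j k l
  - wedge4 1 2 5 6 i j k l - wedge4 1 2 3 4 i j k l - wedge4 2 3 5 7 i j k l
  - wedge4 1 3 6 7 i j k l + wedge4 2 4 6 7 i j k l

/-- The 4-form `σ^T` with `σ^T_{abcd} = T_{sab}T_{scd} + T_{sbc}T_{sad} + T_{sca}T_{sbd}`. -/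
def sigmaT (T : Fin 8 → Fin 8 → Fin 8 → ℝ) (a b c d : Fin 8) : ℝ :=
  ∑ s, (T s a b * T s c d + T s b c * T s a d + T s c a * T s b d)

/-!
The 2-forms on `ℝ⁸` split under `Spin(7)` as `Λ²₇ ⊕ Λ²₂₁`, and contraction with `Φ` in two indices
acts on the summands as `-6` and `2`. Concretely, `Φ = 1 - ∑ₓ ωₓ ⊗ ωₓ` for seven 2-forms `ωₓ` of
square norm `8` spanning `Λ²₇`, where `1_{ijkl} = δ_{ik} δ_{jl} - δ_{il} δ_{jk}`. Squaring this
gives `Φ_{ijab} Φ_{klab} = 6 · 1_{ijkl} - 4 Φ_{ijkl}`, the only property of `Φ` besides its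
antisymmetry that matters.

Write `A_{klm} = T_{jsk} Φ_{jslm}`. Pairing the structure equation with the 3-form `Φ_{i···}` and
using the contraction identity yields `Φ_{iklm} T_{klm} = 7 θ_i`. Pairing it with `T` then expresses
`‖T‖²` through `⟨T, A⟩` and `‖θ‖²`, while `σ^T_{jabc} Φ_{jabc} = 3 ⟨T, A⟩` by antisymmetry.
-/

section Forms

variable {ι R : Type*} [CommRing R]

/-- A 3-form on `R^ι` in components: a totally antisymmetric 3-tensor. Antisymmetry is
required for adjacent transpositions only, since these generate the permutations. -/
structure IsThreeForm (T : ι → ι → ι → R) : Prop where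
  swap₁₂ : ∀ i j k, T j i k = -T i j k
  swap₂₃ : ∀ i j k, T i k j = -T i j k

/-- A 4-form on `R^ι` in components: a totally antisymmetric 4-tensor. Antisymmetry is
required for adjacent transpositions only, since these generate the permutations. -/
structure IsFourForm (Φ : ι → ι → ι → ι → R) : Prop where
  swap₁₂ : ∀ i j k l, Φ j i k l = -Φ i j k l
  swap₂₃ : ∀ i j k l, Φ i k j l = -Φ i j k l
  swap₃₄ : ∀ i j k l, Φ i j l k = -Φ i j k l

namespace IsThreeForm

variable {T : ι → ι → ι → R}

lemma rotate (hT : IsThreeForm T) (i j k : ι) : T j k i = T i j k := by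
  rw [hT.swap₂₃, hT.swap₁₂, neg_neg]

lemma apply_self₁₂ [IsAddTorsionFree R] (hT : IsThreeForm T) (i j : ι) : T i i j = 0 :=
  self_eq_neg.mp (hT.swap₁₂ i i j)

lemma apply_self₁₃ [IsAddTorsionFree R] (hT : IsThreeForm T) (i j : ι) : T i j i = 0 := by
  rw [hT.swap₂₃, hT.apply_self₁₂, neg_zero]

end IsThreeForm

namespace IsFourForm

variable {Φ : ι → ι → ι → ι → R}

lemma isThreeForm (hΦ : IsFourForm Φ) (i : ι) : IsThreeForm (Φ i) :=
  ⟨hΦ.swap₂₃ i, hΦ.swap₃₄ i⟩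

lemma rotate₁₃ (hΦ : IsFourForm Φ) (i j k l : ι) : Φ j k i l = Φ i j k l := by
  rw [hΦ.swap₂₃, hΦ.swap₁₂, neg_neg]

lemma swap_pairs (hΦ : IsFourForm Φ) (i j k l : ι) : Φ k l i j = Φ i j k l := by
  rw [hΦ.swap₂₃, hΦ.swap₁₂, hΦ.swap₃₄, hΦ.swap₂₃, neg_neg, neg_neg]

end IsFourForm

end Forms

section Pairing

variable {ι R : Type*} [Fintype ι] [CommRing R]

/-- The full contraction `S_{ijk} T_{ijk}` of two 3-tensors. -/
def pairing (S T : ι → ι → ι → R) : R := ∑ i, ∑ j, ∑ k, S i j k * T i j k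

/-- The interior product `θ ⌟ Φ`, with components `θ_s Φ_{sklm}`. -/
def interiorProduct (θ : ι → R) (Φ : ι → ι → ι → ι → R) (k l m : ι) : R :=
  ∑ s, θ s * Φ s k l m

/-- The double contraction `T_{jsk} Φ_{jslm}`, with its free indices in the order `k, l, m`. -/
def contractPair (T : ι → ι → ι → R) (Φ : ι → ι → ι → ι → R) (k l m : ι) : R :=
  ∑ j, ∑ s, T j s k * Φ j s l m

/-- The signed sum `A_{klm} - A_{lkm} + A_{mkl}`, which is totally antisymmetric as soon as `A`
is antisymmetric in its last two indices. -/
def alternation (A : ι → ι → ι → R) (k l m : ι) : R := A k l m - A l k m + A m k l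

/-- The structure equation `T = α · Alt(T_{jsk} Φ_{jslm}) + β · θ ⌟ Φ` expressing the torsion `T`
through the 4-form `Φ` and the Lee form `θ`; the `Spin(7)` case is `α = 1/2`, `β = 7/6`. -/
def StructureEquation (α β : R) (T : ι → ι → ι → R) (θ : ι → R) (Φ : ι → ι → ι → ι → R) : Prop :=
  T = α • alternation (contractPair T Φ) + β • interiorProduct θ Φ

lemma pairing_comm (S T : ι → ι → ι → R) : pairing S T = pairing T S := by
  simp only [pairing, mul_comm]

lemma pairing_add (S T U : ι → ι → ι → R) : pairing S (T + U) = pairing S T + pairing S U := by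
  simp only [pairing, Pi.add_apply, mul_add, Finset.sum_add_distrib]

lemma pairing_smul (c : R) (S T : ι → ι → ι → R) : pairing S (c • T) = c * pairing S T := by
  simp only [pairing, Pi.smul_apply, smul_eq_mul, Finset.mul_sum, mul_left_comm]

lemma pairing_interiorProduct (W : ι → ι → ι → R) (θ : ι → R) (Φ : ι → ι → ι → ι → R) :
    pairing W (interiorProduct θ Φ) = ∑ s, θ s * pairing (Φ s) W := by
  have h_summand (s k l m : ι) : W k l m * (θ s * Φ s k l m) = θ s * (Φ s k l m * W k l m) := by
    ring
  simp only [pairing, interiorProduct, Finset.mul_sum, h_summand]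
  symm
  rw [Finset.sum_comm]
  exact Finset.sum_congr rfl fun k _ ↦ Finset.sum_comm_cycle.symm

lemma IsThreeForm.pairing_alternation {W : ι → ι → ι → R} (hW : IsThreeForm W)
    (A : ι → ι → ι → R) : pairing W (alternation A) = 3 * pairing W A := by
  have h_swap : ∑ k, ∑ l, ∑ m, W k l m * A l k m = -pairing W A := by
    rw [Finset.sum_comm]
    simp only [pairing, ← Finset.sum_neg_distrib, ← neg_mul, ← hW.swap₁₂]
  have h_rotate : ∑ k, ∑ l, ∑ m, W k l m * A m k l = pairing W A := by
    rw [Finset.sum_comm_cycle]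
    simp only [pairing, hW.rotate]
  simp only [alternation, pairing, mul_add, mul_sub, Finset.sum_add_distrib,
    Finset.sum_sub_distrib] at h_swap h_rotate ⊢
  rw [h_swap, h_rotate]
  ring

lemma IsThreeForm.pairing_contractPair {T : ι → ι → ι → R} (hT : IsThreeForm T)
    (S : ι → ι → ι → R) (Φ : ι → ι → ι → ι → R) :
    pairing S (contractPair T Φ) = ∑ k, ∑ j, ∑ s, T k j s * ∑ l, ∑ m, Φ j s l m * S k l m := by
  have h_summand (k l m j s : ι) :
      S k l m * (T k j s * Φ j s l m) = T k j s * (Φ j s l m * S k l m) := by ring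
  simp only [pairing, contractPair, hT.rotate, Finset.mul_sum, h_summand]
  refine Finset.sum_congr rfl fun k _ ↦ ?_
  rw [Finset.sum_comm_cycle]
  exact Finset.sum_congr rfl fun j _ ↦ Finset.sum_comm_cycle

lemma StructureEquation.pairing_eq {α β : R} {T W : ι → ι → ι → R} {θ : ι → R}
    {Φ : ι → ι → ι → ι → R} (h : StructureEquation α β T θ Φ) (hW : IsThreeForm W) :
    pairing W T = 3 * α * pairing W (contractPair T Φ) + β * ∑ s, θ s * pairing (Φ s) W := by
  conv_lhs => rw [h]
  rw [pairing_add, pairing_smul, pairing_smul, hW.pairing_alternation, pairing_interiorProduct]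
  ring

end Pairing

section CoordinateTwoForms

variable {ι R : Type*} [DecidableEq ι] [CommRing R]

/-- The component `(e_a ∧ e_b)_{ij} = δ_{ai} δ_{bj} - δ_{aj} δ_{bi}` of a product of two
coordinate 1-forms. Read as a 4-tensor, it acts on 2-forms as twice the identity, by contraction
over all pairs of indices. -/
def wedge2 (a b i j : ι) : R :=
  (1 : Matrix ι ι R) a i * (1 : Matrix ι ι R) b j - (1 : Matrix ι ι R) a j * (1 : Matrix ι ι R) b i

lemma wedge2_swap_pairs (i j k l : ι) : (wedge2 k l i j : R) = wedge2 i j k l := by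
  simp only [wedge2, Matrix.one_apply, eq_comm]
  ring

lemma wedge2_swap₃₄ (i j k l : ι) : (wedge2 i j l k : R) = -wedge2 i j k l :=
  (neg_sub _ _).symm

variable [Fintype ι]

lemma sum_wedge2_mul (a b : ι) (B : ι → ι → R) :
    ∑ l, ∑ m, wedge2 a b l m * B l m = B a b - B b a := by
  simp [wedge2, sub_mul, Finset.sum_sub_distrib, Matrix.one_apply]

lemma sum_wedge2_trace (i s : ι) :
    ∑ k, wedge2 i k s k = ((Fintype.card ι : R) - 1) * (1 : Matrix ι ι R) i s := by
  rw [sub_one_mul]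
  simp [wedge2, Finset.sum_sub_distrib, Matrix.one_apply]

end CoordinateTwoForms

section ContractionIdentity

variable {ι κ R : Type*} [Fintype ι] [DecidableEq ι] [CommRing R]

/-- The quadratic identity `Φ_{ijab} Φ_{klab} = p (δ_{ik} δ_{jl} - δ_{il} δ_{jk}) + q Φ_{ijkl}`. -/
def ContractionIdentity (p q : R) (Φ : ι → ι → ι → ι → R) : Prop :=
  ∀ i j k l, ∑ a, ∑ b, Φ i j a b * Φ k l a b = p * wedge2 i j k l + q * Φ i j k l

/-- A decomposition `Φ = 1 - ∑ₓ ωₓ ⊗ ωₓ`, with `1` the tensor `wedge2`, into pairwise orthogonal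
2-forms `ωₓ` of square norm `c`. For the `Spin(7)`-form, these span `Λ²₇`. -/
structure IsOrthogonalSplitting [Fintype κ] [DecidableEq κ] (c : R) (Φ : ι → ι → ι → ι → R)
    (ω : κ → ι → ι → R) : Prop where
  eq_sub : ∀ i j k l, Φ i j k l = wedge2 i j k l - ∑ x, ω x i j * ω x k l
  swap : ∀ x i j, ω x j i = -ω x i j
  orthogonal : ∀ x y, ∑ a, ∑ b, ω x a b * ω y a b = c * (1 : Matrix κ κ R) x y

namespace IsOrthogonalSplitting

variable [Fintype κ] [DecidableEq κ] {c : R} {Φ : ι → ι → ι → ι → R} {ω : κ → ι → ι → R}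

lemma sum_mul (h : IsOrthogonalSplitting c Φ ω) (B : ι → ι → R) (i j : ι) :
    ∑ a, ∑ b, Φ i j a b * B a b
      = B i j - B j i - ∑ x, ω x i j * ∑ a, ∑ b, ω x a b * B a b := by
  simp only [h.eq_sub, sub_mul, Finset.sum_sub_distrib, sum_wedge2_mul, Finset.sum_mul,
    Finset.mul_sum]
  rw [Finset.sum_comm_cycle]
  simp only [mul_assoc]

lemma sum_mul_twoForm (h : IsOrthogonalSplitting c Φ ω) (x : κ) (i j : ι) :
    ∑ a, ∑ b, Φ i j a b * ω x a b = (2 - c) * ω x i j := by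
  rw [h.sum_mul, h.swap x i j]
  simp only [h.orthogonal, Matrix.one_apply, mul_ite, mul_one, mul_zero, Finset.sum_ite_eq',
    Finset.mem_univ, if_true]
  ring

lemma contractionIdentity (h : IsOrthogonalSplitting c Φ ω) :
    ContractionIdentity (c - 2) (4 - c) Φ := by
  intro i j k l
  have h_pairs : Φ k l i j = Φ i j k l := by
    simp only [h.eq_sub, wedge2_swap_pairs i j k l, mul_comm (ω _ k l)]
  have h_swap : Φ k l j i = -Φ k l i j := by
    simp only [h.eq_sub, wedge2_swap₃₄ k l i j, h.swap _ i j, mul_neg, Finset.sum_neg_distrib]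
    ring
  have h_eigen (x : κ) : ∑ a, ∑ b, ω x a b * Φ k l a b = (2 - c) * ω x k l := by
    simpa only [mul_comm] using h.sum_mul_twoForm x k l
  calc ∑ a, ∑ b, Φ i j a b * Φ k l a b
      = Φ k l i j - Φ k l j i - (2 - c) * ∑ x, ω x i j * ω x k l := by
        simp only [h.sum_mul, h_eigen, Finset.mul_sum, mul_left_comm]
    _ = 2 * Φ i j k l - (2 - c) * (wedge2 i j k l - Φ i j k l) := by
        rw [h_swap, h_pairs, h.eq_sub i j k l]
        ring
    _ = (c - 2) * wedge2 i j k l + (4 - c) * Φ i j k l := by ring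

end IsOrthogonalSplitting

variable [IsAddTorsionFree R] {Φ : ι → ι → ι → ι → R} {p q : R}

lemma ContractionIdentity.pairing_self (h : ContractionIdentity p q Φ) (hΦ : IsFourForm Φ)
    (i s : ι) :
    pairing (Φ i) (Φ s) = p * ((Fintype.card ι : R) - 1) * (1 : Matrix ι ι R) i s := by
  simp only [pairing, h i _ s _, (hΦ.isThreeForm i).apply_self₁₃, mul_zero, add_zero,
    ← Finset.mul_sum, sum_wedge2_trace, mul_assoc]

lemma ContractionIdentity.pairing_contractPair (h : ContractionIdentity p q Φ)
    (hΦ : IsFourForm Φ) {T : ι → ι → ι → R} (hT : IsThreeForm T) (i : ι) :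
    pairing (Φ i) (contractPair T Φ) = q * pairing (Φ i) T := by
  have h_trace (k : ι) : ∑ j, ∑ s, T k j s * wedge2 j s i k = 0 := by
    simp only [mul_comm (T k _ _), ← wedge2_swap_pairs _ _ i k, sum_wedge2_mul]
    rw [hT.apply_self₁₃, hT.apply_self₁₂, sub_zero]
  calc pairing (Φ i) (contractPair T Φ)
      = ∑ k, ∑ j, ∑ s, T k j s * (p * wedge2 j s i k + q * Φ i k j s) := by
        simp only [hT.pairing_contractPair, h _ _ i _, hΦ.swap_pairs i]
    _ = p * ∑ k, ∑ j, ∑ s, T k j s * wedge2 j s i k + q * pairing T (Φ i) := by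
        simp only [pairing, mul_add, Finset.sum_add_distrib, Finset.mul_sum, mul_left_comm]
    _ = q * pairing (Φ i) T := by
        simp only [h_trace, Finset.sum_const_zero, mul_zero, zero_add, pairing_comm T]

lemma StructureEquation.pairing_fourForm {α β : R} {T : ι → ι → ι → R} {θ : ι → R}
    (hS : StructureEquation α β T θ Φ) (h : ContractionIdentity p q Φ) (hΦ : IsFourForm Φ)
    (hT : IsThreeForm T) (i : ι) :
    (1 - 3 * α * q) * pairing (Φ i) T = β * p * ((Fintype.card ι : R) - 1) * θ i := by
  have h_eq := hS.pairing_eq (hΦ.isThreeForm i)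
  simp only [h.pairing_contractPair hΦ hT, h.pairing_self hΦ, Matrix.one_apply, mul_ite, mul_one,
    mul_zero, Finset.sum_ite_eq', Finset.mem_univ, if_true] at h_eq
  linear_combination h_eq

end ContractionIdentity

lemma IsThreeForm.sum_sigmaT_mul {T : Fin 8 → Fin 8 → Fin 8 → ℝ} (hT : IsThreeForm T)
    {Φ : Fin 8 → Fin 8 → Fin 8 → Fin 8 → ℝ} (hΦ : IsFourForm Φ) :
    ∑ j, ∑ a, ∑ b, ∑ c, sigmaT T j a b c * Φ j a b c = 3 * pairing T (contractPair T Φ) := by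
  let F (j a b c : Fin 8) : ℝ := (∑ s, T s j a * T s b c) * Φ j a b c
  have h_sigma (j a b c : Fin 8) :
      sigmaT T j a b c * Φ j a b c = F j a b c + F a b j c + F b j a c := by
    simp only [F, sigmaT, Finset.sum_add_distrib, hΦ.rotate₁₃ j a b c, ← hΦ.rotate₁₃ b j a c]
    ring
  have h_rotate (G : Fin 8 → Fin 8 → Fin 8 → ℝ) :
      ∑ j, ∑ a, ∑ b, G a b j = ∑ j, ∑ a, ∑ b, G j a b := Finset.sum_comm_cycle.symm
  have h_pairing : pairing T (contractPair T Φ) = ∑ j, ∑ a, ∑ b, ∑ c, F j a b c := by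
    have h_summand (s j a b c : Fin 8) :
        T s j a * (Φ j a b c * T s b c) = T s j a * T s b c * Φ j a b c := by ring
    simp only [hT.pairing_contractPair, F, Finset.sum_mul, Finset.mul_sum, h_summand]
    rw [← Finset.sum_comm_cycle]
    exact Finset.sum_congr rfl fun j _ ↦ Finset.sum_congr rfl fun a _ ↦ Finset.sum_comm_cycle.symm
  simp only [h_sigma, Finset.sum_add_distrib]
  rw [h_rotate fun j a b ↦ ∑ c, F j a b c, ← h_rotate fun j a b ↦ ∑ c, F b j a c, h_pairing]
  ring

section CayleyForm

/-- Orthogonal 2-forms `ωₓ` of square norm `8` spanning `Λ²₇`, with `cayleyTwoForm x` equal to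
`e₀ ∧ e_{x+1} - Φ_{0,x+1,·,·}`. -/
def cayleyTwoForm : Fin 7 → Fin 8 → Fin 8 → ℝ
  | 0 => wedge2 0 1 + wedge2 2 7 + wedge2 3 5 - wedge2 4 6
  | 1 => wedge2 0 2 - wedge2 1 7 - wedge2 3 6 - wedge2 4 5
  | 2 => wedge2 0 3 - wedge2 1 5 + wedge2 2 6 + wedge2 4 7
  | 3 => wedge2 0 4 + wedge2 1 6 + wedge2 2 5 - wedge2 3 7
  | 4 => wedge2 0 5 + wedge2 1 3 - wedge2 2 4 + wedge2 6 7
  | 5 => wedge2 0 6 - wedge2 1 4 - wedge2 2 3 - wedge2 5 7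
  | 6 => wedge2 0 7 + wedge2 1 2 + wedge2 3 4 + wedge2 5 6

lemma cayleyTwoForm_swap (x : Fin 7) (i j : Fin 8) :
    cayleyTwoForm x j i = -cayleyTwoForm x i j := by
  fin_cases x <;> simp only [cayleyTwoForm, wedge2, Pi.add_apply, Pi.sub_apply] <;> ring

lemma cayleyTwoForm_orthogonal (x y : Fin 7) :
    ∑ a, ∑ b, cayleyTwoForm x a b * cayleyTwoForm y a b
      = 8 * (1 : Matrix (Fin 7) (Fin 7) ℝ) x y := by
  -- Hiding the second factor keeps the expansion of the sum at four terms.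
  generalize hB : cayleyTwoForm y = B
  fin_cases x <;>
    simp only [cayleyTwoForm, Pi.add_apply, Pi.sub_apply, add_mul, sub_mul,
      Finset.sum_add_distrib, Finset.sum_sub_distrib, sum_wedge2_mul] <;>
    subst hB <;> fin_cases y <;>
    simp only [cayleyTwoForm, Pi.add_apply, Pi.sub_apply, wedge2, Matrix.one_apply, Fin.isValue,
      Fin.reduceFinMk, Fin.zero_eta, Fin.mk_one, Fin.reduceEq, zero_ne_one, one_ne_zero,
      if_true, if_false] <;>
    norm_num

-- The Laplace expansion of the determinant along its first two columns.
lemma wedge4_eq_wedge2_mul_wedge2 (a b c d i j k l : Fin 8) :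
    wedge4 a b c d i j k l
      = wedge2 a b i j * wedge2 c d k l - wedge2 a c i j * wedge2 b d k l
        + wedge2 a d i j * wedge2 b c k l + wedge2 b c i j * wedge2 a d k l
        - wedge2 b d i j * wedge2 a c k l + wedge2 c d i j * wedge2 a b k l := by
  have h_kd (a b : Fin 8) : kd a b = (1 : Matrix (Fin 8) (Fin 8) ℝ) a b := rfl
  rw [wedge4, Matrix.det_succ_row_zero]
  simp only [Matrix.det_fin_three, Fin.sum_univ_four]
  simp only [h_kd, wedge2, Nat.succ_eq_add_one, Nat.reduceAdd, Fin.isValue, Fin.coe_ofNat_eq_mod,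
    Nat.zero_mod, pow_zero, Matrix.of_apply, Matrix.cons_val', Matrix.cons_val_zero,
    Matrix.cons_val_fin_one, one_mul, Fin.succAbove_zero, Matrix.submatrix_apply,
    Fin.succ_zero_eq_one, Matrix.cons_val_one, Fin.succ_one_eq_two, Matrix.cons_val,
    Fin.reduceSucc, Nat.one_mod, pow_one, neg_mul, Fin.succAbove, Fin.castSucc_zero, zero_lt_one,
    ↓reduceIte, Fin.castSucc_one, lt_self_iff_false, Fin.reduceCastSucc, Fin.lt_one_iff,
    Fin.reduceEq, Nat.reduceMod, even_two, Even.neg_pow, one_pow, Fin.reduceLT, Nat.mod_succ]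
  ring

lemma isFourForm_wedge4 (a b c d : Fin 8) : IsFourForm (wedge4 a b c d) := by
  constructor <;> intro i j k l <;> simp only [wedge4_eq_wedge2_mul_wedge2, wedge2] <;> ring

lemma isFourForm_Phi : IsFourForm Phi := by
  constructor <;> intro i j k l <;>
    simp only [Phi, (isFourForm_wedge4 _ _ _ _).swap₁₂ i j k l,
      (isFourForm_wedge4 _ _ _ _).swap₂₃ i j k l, (isFourForm_wedge4 _ _ _ _).swap₃₄ i j k l] <;>
    ring

lemma Phi_eq_wedge2_sub (i j k l : Fin 8) :
    Phi i j k l = wedge2 i j k l - ∑ x, cayleyTwoForm x i j * cayleyTwoForm x k l := by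
  -- Writing `δ_{ij} = δ_{ci} δ_{cj}` makes both sides polynomials in the coordinates `δ_{ci}` of
  -- the four basis vectors.
  have h_one (i j : Fin 8) : (1 : Matrix (Fin 8) (Fin 8) ℝ) i j
      = ∑ c, (1 : Matrix (Fin 8) (Fin 8) ℝ) c i * (1 : Matrix (Fin 8) (Fin 8) ℝ) c j := by
    simp [Matrix.one_apply, eq_comm]
  rw [wedge2, h_one i k, h_one j l, h_one i l, h_one j k]
  simp only [Phi, wedge4_eq_wedge2_mul_wedge2, Fin.sum_univ_seven, Fin.sum_univ_eight,
    cayleyTwoForm, Pi.add_apply, Pi.sub_apply, wedge2]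
  ring

lemma isOrthogonalSplitting_Phi : IsOrthogonalSplitting 8 Phi cayleyTwoForm :=
  ⟨Phi_eq_wedge2_sub, cayleyTwoForm_swap, cayleyTwoForm_orthogonal⟩

lemma contractionIdentity_Phi : ContractionIdentity 6 (-4) Phi := by
  convert isOrthogonalSplitting_Phi.contractionIdentity using 1 <;> norm_num

end CayleyForm

/-- If a 3-form `T` and a 1-form `θ` satisfy the structure equation, then
`σ^T_{jabc}Φ_{jabc} = 2‖T‖² - (49/3)‖θ‖²`. -/
theorem spin7_sigmaT_contraction :
    ∀ T : Fin 8 → Fin 8 → Fin 8 → ℝ, ∀ θ : Fin 8 → ℝ,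
      (∀ i j k, T i j k = -T j i k ∧ T i j k = -T i k j) →
      (∀ k l m, T k l m =
          (1/2) * (∑ j, ∑ s, T j s k * Phi j s l m)
        - (1/2) * (∑ j, ∑ s, T j s l * Phi j s k m)
        + (1/2) * (∑ j, ∑ s, T j s m * Phi j s k l)
        + (7/6) * ∑ s, θ s * Phi s k l m) →
      (∑ j, ∑ a, ∑ b, ∑ c, sigmaT T j a b c * Phi j a b c)
        = 2 * (∑ i, ∑ j, ∑ k, T i j k * T i j k) - (49/3) * ∑ i, θ i * θ i := by
  intro T θ hT hS
  have hT_form : IsThreeForm T :=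
    ⟨fun i j k ↦ by rw [(hT i j k).1, neg_neg], fun i j k ↦ by rw [(hT i j k).2, neg_neg]⟩
  have hT_eq : StructureEquation (1 / 2) (7 / 6) T θ Phi := by
    ext k l m
    rw [hS k l m]
    simp only [Pi.add_apply, Pi.smul_apply, smul_eq_mul, alternation, contractPair,
      interiorProduct]
    ring
  have h_contract (i : Fin 8) : pairing (Phi i) T = 7 * θ i := by
    have h := hT_eq.pairing_fourForm contractionIdentity_Phi isFourForm_Phi hT_form i
    rw [Fintype.card_fin] at h
    linear_combination h / 7
  have h_norm : pairing T T
      = 3 / 2 * pairing T (contractPair T Phi) + 49 / 6 * ∑ i, θ i * θ i := by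
    rw [hT_eq.pairing_eq hT_form]
    simp only [h_contract, mul_left_comm (θ _) 7, ← Finset.mul_sum]
    ring
  rw [hT_form.sum_sigmaT_mul isFourForm_Phi, ← pairing, h_norm]
  ring
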